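/- arXiv:1104.1872 — 2 statements merged into one kernel-verified Lean document; each statement's English description precedes it below -/
import Mathlib

section
/- Let 𝒢 be a group structure on {1,…,p} with positive weights (η_g), let Ω(w) = Σ_{g∈𝒢} η_g ‖w_g‖_∞, let λ > 0 and u ∈ ℝ^p. If ξ* = (ξ*^g)_{g∈𝒢} is a minimizer of ½‖u − Σ_{g∈𝒢} ξ^g‖₂² over all families ξ = (ξ^g)_{g∈𝒢} of vectors in ℝ^p satisfying ξ^g_j = 0 for j ∉ g and ‖ξ^g‖₁ ≤ λη_g for every g ∈ 𝒢, then w* := u − Σ_{g∈𝒢} ξ*^g is the unique minimizer of w ↦ ½‖u − w‖₂² + λΩ(w) over ℝ^p. -/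
open Finset

/-- The ℓ∞-norm of the subvector of `w` indexed by the group `g`
(equal to `max_{j ∈ g} |w j|` for nonempty `g`, and `0` for empty `g`). -/
noncomputable def gsup {p : ℕ} (g : Finset (Fin p)) (w : Fin p → ℝ) : ℝ :=
  ↑(g.sup fun j => Real.nnabs (w j))

/-- The structured norm `Ω(w) = ∑_{g ∈ 𝒢} η_g ‖w_g‖_∞`. -/
noncomputable def Omega {p : ℕ} (G : Finset (Finset (Fin p)))
    (η : Finset (Fin p) → ℝ) (w : Fin p → ℝ) : ℝ :=
  ∑ g ∈ G, η g * gsup g w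

/-- ℓ₁-norm of a vector. -/
def l1 {p : ℕ} (v : Fin p → ℝ) : ℝ := ∑ j, |v j|

/-- A family `ξ = (ξ^g)_{g ∈ 𝒢}` is dual-feasible at level `lam` if `ξ^g_j = 0` for
`j ∉ g` and `‖ξ^g‖₁ ≤ lam * η_g` for every `g ∈ 𝒢`. -/
def DualFeasible {p : ℕ} (G : Finset (Finset (Fin p))) (η : Finset (Fin p) → ℝ)
    (lam : ℝ) (ξ : Finset (Fin p) → Fin p → ℝ) : Prop :=
  ∀ g ∈ G, (∀ j, j ∉ g → ξ g j = 0) ∧ l1 (ξ g) ≤ lam * η g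

/-- Primal (proximal) objective `½‖u − w‖₂² + λ Ω(w)`. -/
noncomputable def proxObj {p : ℕ} (G : Finset (Finset (Fin p)))
    (η : Finset (Fin p) → ℝ) (lam : ℝ) (u w : Fin p → ℝ) : ℝ :=
  (1/2) * ∑ j, (u j - w j)^2 + lam * Omega G η w

/-- Dual objective `½‖u − ∑_{g} ξ^g‖₂²`. -/
noncomputable def dualObj {p : ℕ} (G : Finset (Finset (Fin p))) (u : Fin p → ℝ)
    (ξ : Finset (Fin p) → Fin p → ℝ) : ℝ :=
  (1/2) * ∑ j, (u j - ∑ g ∈ G, ξ g j)^2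

theorem gsup_attained {p : ℕ} (g : Finset (Fin p)) (hg : g.Nonempty) (w : Fin p → ℝ) :
    ∃ j ∈ g, gsup g w = |w j| := by
  obtain ⟨j, hj, h⟩ := Finset.exists_mem_eq_sup g hg (fun j => Real.nnabs (w j))
  refine ⟨j, hj, ?_⟩
  unfold gsup
  rw [h]
  simp

theorem abs_le_gsup {p : ℕ} (g : Finset (Fin p)) (w : Fin p → ℝ) {j : Fin p} (hj : j ∈ g) :
    |w j| ≤ gsup g w := by
  have h : Real.nnabs (w j) ≤ g.sup (fun j => Real.nnabs (w j)) :=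
    Finset.le_sup (f := fun j => Real.nnabs (w j)) hj
  have h2 := NNReal.coe_le_coe.mpr h
  simpa [gsup] using h2

theorem gsup_nonneg {p : ℕ} (g : Finset (Fin p)) (w : Fin p → ℝ) : 0 ≤ gsup g w :=
  NNReal.coe_nonneg _

theorem inner_le_Omega {p : ℕ} (G : Finset (Finset (Fin p))) (η : Finset (Fin p) → ℝ)
    (lam : ℝ) (ξ : Finset (Fin p) → Fin p → ℝ) (h : DualFeasible G η lam ξ) (w : Fin p → ℝ) :
    ∑ j, (∑ g ∈ G, ξ g j) * w j ≤ lam * Omega G η w := by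
  simp only [Finset.sum_mul]
  rw [Finset.sum_comm]
  unfold Omega
  rw [Finset.mul_sum]
  apply Finset.sum_le_sum
  intro g hg
  obtain ⟨h0, h1⟩ := h g hg
  calc ∑ j, ξ g j * w j ≤ ∑ j, |ξ g j| * gsup g w := by
        apply Finset.sum_le_sum
        intro j _
        by_cases hj : j ∈ g
        · calc ξ g j * w j ≤ |ξ g j * w j| := le_abs_self _
            _ = |ξ g j| * |w j| := abs_mul _ _
            _ ≤ _ := mul_le_mul_of_nonneg_left (abs_le_gsup g w hj) (abs_nonneg _)
        · simp [h0 j hj]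
    _ = l1 (ξ g) * gsup g w := by rw [l1, Finset.sum_mul]
    _ ≤ (lam * η g) * gsup g w := mul_le_mul_of_nonneg_right h1 (gsup_nonneg g w)
    _ = _ := by ring

theorem exists_inner_eq_Omega {p : ℕ} (G : Finset (Finset (Fin p))) (η : Finset (Fin p) → ℝ)
    (hne : ∀ g ∈ G, g.Nonempty) (hη : ∀ g ∈ G, 0 < η g)
    (lam : ℝ) (hlam : 0 < lam) (w : Fin p → ℝ) :
    ∃ ξ, DualFeasible G η lam ξ ∧ ∑ j, (∑ g ∈ G, ξ g j) * w j = lam * Omega G η w := by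
  have hex : ∀ g : Finset (Fin p), ∃ v : Fin p → ℝ, g ∈ G →
      ((∀ j, j ∉ g → v j = 0) ∧ l1 v ≤ lam * η g) ∧
        ∑ j, v j * w j = lam * (η g * gsup g w) := by
    intro g
    by_cases hg : g ∈ G
    · obtain ⟨k, hk, hkw⟩ := gsup_attained g (hne g hg) w
      have hpos : 0 < lam * η g := mul_pos hlam (hη g hg)
      refine ⟨fun j => if j = k then lam * η g * (if 0 ≤ w k then 1 else -1) else 0,
        fun _ => ⟨⟨?_, ?_⟩, ?_⟩⟩
      · intro j hj
        have : j ≠ k := fun h => hj (h ▸ hk)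
        simp [this]
      · unfold l1
        rw [Finset.sum_eq_single k]
        · split_ifs <;> simp_all [abs_of_pos]
        · intro j _ hj
          simp [hj]
        · simp
      · rw [Finset.sum_eq_single k]
        · rw [hkw]
          by_cases h : 0 ≤ w k
          · simp [h, abs_of_nonneg h]; ring
          · simp [h, abs_of_neg (not_le.mp h)]; ring
        · intro j _ hj
          simp [hj]
        · simp
    · exact ⟨0, fun h => absurd h hg⟩
  choose ξ hξ using hex
  refine ⟨ξ, fun g hg => (hξ g hg).1, ?_⟩
  simp only [Finset.sum_mul]
  rw [Finset.sum_comm]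
  unfold Omega
  rw [Finset.mul_sum]
  exact Finset.sum_congr rfl fun g hg => (hξ g hg).2

theorem feasible_combo {p : ℕ} (G : Finset (Finset (Fin p))) (η : Finset (Fin p) → ℝ)
    (lam : ℝ) (a b : Finset (Fin p) → Fin p → ℝ) (ha : DualFeasible G η lam a)
    (hb : DualFeasible G η lam b) (t : ℝ) (h0 : 0 ≤ t) (h1 : t ≤ 1) :
    DualFeasible G η lam (fun g j => a g j + t * (b g j - a g j)) := by
  intro g hg
  obtain ⟨a0, a1⟩ := ha g hg
  obtain ⟨b0, b1⟩ := hb g hg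
  refine ⟨fun j hj => by simp [a0 j hj, b0 j hj], ?_⟩
  calc l1 (fun j => a g j + t * (b g j - a g j))
      ≤ ∑ j, ((1 - t) * |a g j| + t * |b g j|) := by
        apply Finset.sum_le_sum
        intro j _
        have e : a g j + t * (b g j - a g j) = (1 - t) * a g j + t * b g j := by ring
        beta_reduce; rw [e]
        refine (abs_add_le _ _).trans ?_
        rw [abs_mul, abs_mul, abs_of_nonneg h0, abs_of_nonneg (sub_nonneg.mpr h1)]
    _ = (1 - t) * l1 (a g) + t * l1 (b g) := by
        rw [Finset.sum_add_distrib, ← Finset.mul_sum, ← Finset.mul_sum]; rfl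
    _ ≤ (1 - t) * (lam * η g) + t * (lam * η g) :=
        add_le_add (mul_le_mul_of_nonneg_left a1 (sub_nonneg.mpr h1))
          (mul_le_mul_of_nonneg_left b1 h0)
    _ = _ := by ring

theorem first_order {a b : ℝ} (hb : 0 ≤ b)
    (h : ∀ t : ℝ, 0 ≤ t → t ≤ 1 → 0 ≤ -(t * a) + t ^ 2 * b) : a ≤ 0 := by
  by_contra! ha
  have hs : 0 < a + b := by linarith
  have h1 := h (a / (a + b)) (by positivity) ((div_le_one hs).mpr (by linarith))
  have e : -(a / (a + b) * a) + (a / (a + b)) ^ 2 * b = -(a ^ 3 / (a + b) ^ 2) := by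
    field_simp
    ring
  rw [e] at h1
  have : 0 < a ^ 3 / (a + b) ^ 2 := by positivity
  linarith

theorem dual_opt {p : ℕ} (G : Finset (Finset (Fin p))) (η : Finset (Fin p) → ℝ)
    (lam : ℝ) (u : Fin p → ℝ) (ξs : Finset (Fin p) → Fin p → ℝ)
    (hfeas : DualFeasible G η lam ξs)
    (hmin : ∀ ξ : Finset (Fin p) → Fin p → ℝ, DualFeasible G η lam ξ →
      dualObj G u ξs ≤ dualObj G u ξ)
    (ξ : Finset (Fin p) → Fin p → ℝ) (hξ : DualFeasible G η lam ξ) :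
    ∑ j, (∑ g ∈ G, ξ g j - ∑ g ∈ G, ξs g j) * (u j - ∑ g ∈ G, ξs g j) ≤ 0 := by
  refine first_order (b := (1/2) * ∑ j, (∑ g ∈ G, ξ g j - ∑ g ∈ G, ξs g j) ^ 2)
    (by positivity) ?_
  intro t h0 h1
  have h := hmin _ (feasible_combo G η lam ξs ξ hfeas hξ t h0 h1)
  unfold dualObj at h
  simp only [Finset.sum_add_distrib, ← Finset.mul_sum, Finset.sum_sub_distrib] at h
  have e : ∑ j, (u j - (∑ g ∈ G, ξs g j + t * (∑ g ∈ G, ξ g j - ∑ g ∈ G, ξs g j))) ^ 2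
      = ∑ j, (u j - ∑ g ∈ G, ξs g j) ^ 2
        - 2 * t * ∑ j, (∑ g ∈ G, ξ g j - ∑ g ∈ G, ξs g j) * (u j - ∑ g ∈ G, ξs g j)
        + t ^ 2 * ∑ j, (∑ g ∈ G, ξ g j - ∑ g ∈ G, ξs g j) ^ 2 := by
    rw [Finset.mul_sum, Finset.mul_sum, ← Finset.sum_sub_distrib, ← Finset.sum_add_distrib]
    exact Finset.sum_congr rfl fun j _ => by ring
  rw [e] at h
  linarith

/-- if `ξ*` minimizes the dual objective over dual-feasible families,
then `w* = u − ∑_g ξ*^g` is the unique minimizer of `w ↦ ½‖u−w‖₂² + λΩ(w)`. -/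
theorem stmt0 {p : ℕ} (G : Finset (Finset (Fin p))) (η : Finset (Fin p) → ℝ)
    (hne : ∀ g ∈ G, g.Nonempty) (hη : ∀ g ∈ G, 0 < η g)
    (lam : ℝ) (hlam : 0 < lam) (u : Fin p → ℝ)
    (ξs : Finset (Fin p) → Fin p → ℝ)
    (hfeas : DualFeasible G η lam ξs)
    (hmin : ∀ ξ : Finset (Fin p) → Fin p → ℝ, DualFeasible G η lam ξ →
      dualObj G u ξs ≤ dualObj G u ξ) :
    (∀ w : Fin p → ℝ,
        proxObj G η lam u (fun j => u j - ∑ g ∈ G, ξs g j) ≤ proxObj G η lam u w) ∧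
    (∀ w : Fin p → ℝ,
        proxObj G η lam u w ≤ proxObj G η lam u (fun j => u j - ∑ g ∈ G, ξs g j) →
        w = fun j => u j - ∑ g ∈ G, ξs g j) := by
  have key : ∀ w : Fin p → ℝ,
      proxObj G η lam u (fun j => u j - ∑ g ∈ G, ξs g j)
        + (1/2) * ∑ j, (w j - (u j - ∑ g ∈ G, ξs g j)) ^ 2 ≤ proxObj G η lam u w := by
    intro w
    obtain ⟨ξ, hξ, he⟩ := exists_inner_eq_Omega G η hne hη lam hlam
      (fun j => u j - ∑ g ∈ G, ξs g j)
    have h1 := dual_opt G η lam u ξs hfeas hmin ξ hξ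
    have h2 := inner_le_Omega G η lam ξs hfeas w
    simp only [sub_mul _ _ (_ - _), Finset.sum_sub_distrib (fun j => _ * _)] at h1
    have e : ∑ j, (u j - w j) ^ 2 = ∑ j, (u j - (u j - ∑ g ∈ G, ξs g j)) ^ 2
        - 2 * ∑ j, (∑ g ∈ G, ξs g j) * w j
        + 2 * ∑ j, (∑ g ∈ G, ξs g j) * (u j - ∑ g ∈ G, ξs g j)
        + ∑ j, (w j - (u j - ∑ g ∈ G, ξs g j)) ^ 2 := by
      rw [Finset.mul_sum, Finset.mul_sum, ← Finset.sum_sub_distrib, ← Finset.sum_add_distrib,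
        ← Finset.sum_add_distrib]
      exact Finset.sum_congr rfl fun j _ => by ring
    unfold proxObj
    rw [e]
    linarith
  refine ⟨fun w => ?_, fun w hw => ?_⟩
  · have h := key w
    have : 0 ≤ ∑ j, (w j - (u j - ∑ g ∈ G, ξs g j)) ^ 2 := by positivity
    linarith
  · have h := key w
    have h0 : ∑ j, (w j - (u j - ∑ g ∈ G, ξs g j)) ^ 2 = 0 := by
      have : 0 ≤ ∑ j, (w j - (u j - ∑ g ∈ G, ξs g j)) ^ 2 := by positivity
      linarith
    funext j
    have hj := (Finset.sum_eq_zero_iff_of_nonneg (fun j _ => sq_nonneg _)).mp h0 j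
      (Finset.mem_univ j)
    exact sub_eq_zero.mp (pow_eq_zero_iff two_ne_zero |>.mp hj)
end

section
/- Let 𝒢 be a partition of {1,…,p} into nonempty groups, let λ > 0 and u ∈ ℝ^p, and let Ω(w) = Σ_{g∈𝒢} ‖w_g‖_∞. Then the unique minimizer w* of w ↦ ½‖u − w‖₂² + λΩ(w) is given groupwise by w*_g = u_g − Π_{‖·‖₁ ≤ λ}(u_g) for every g ∈ 𝒢, where Π_{‖·‖₁ ≤ λ}(u_g) denotes the Euclidean orthogonal projection of u_g onto the ℓ₁-ball of radius λ; in particular w*_g = 0 whenever ‖u_g‖₁ ≤ λ. -/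
open Finset

lemma aux_var {p : ℕ} (g : Finset (Fin p)) (lam : ℝ) (u π v : Fin p → ℝ)
    (hπ : ∑ j ∈ g, |π j| ≤ lam)
    (hmin : ∀ v : Fin p → ℝ, (∑ j ∈ g, |v j| ≤ lam) →
            ∑ j ∈ g, (u j - π j)^2 ≤ ∑ j ∈ g, (u j - v j)^2)
    (hv : ∑ j ∈ g, |v j| ≤ lam) :
    ∑ j ∈ g, (u j - π j) * (v j - π j) ≤ 0 := by
  set A := ∑ j ∈ g, (u j - π j) * (v j - π j) with hA
  set B := ∑ j ∈ g, (v j - π j)^2 with hB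
  have hB0 : 0 ≤ B := Finset.sum_nonneg fun j _ => sq_nonneg _
  have key : ∀ t : ℝ, 0 < t → t ≤ 1 → 2 * A ≤ t * B := by
    intro t ht ht1
    have h1 := hmin (fun j => (1 - t) * π j + t * v j) (by
      calc ∑ j ∈ g, |(1 - t) * π j + t * v j|
          ≤ ∑ j ∈ g, ((1 - t) * |π j| + t * |v j|) := by
            refine Finset.sum_le_sum fun j _ => ?_
            refine (abs_add_le _ _).trans ?_
            rw [abs_mul, abs_mul, abs_of_nonneg (by linarith : 0 ≤ 1 - t), abs_of_pos ht]
        _ = (1 - t) * ∑ j ∈ g, |π j| + t * ∑ j ∈ g, |v j| := by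
            rw [Finset.sum_add_distrib, Finset.mul_sum, Finset.mul_sum]
        _ ≤ lam := by nlinarith)
    have h2 : ∑ j ∈ g, (u j - ((1 - t) * π j + t * v j))^2
        = ∑ j ∈ g, (u j - π j)^2 - t * (2 * A) + t * (t * B) := by
      rw [hA, hB]
      simp only [Finset.mul_sum]
      rw [← Finset.sum_sub_distrib, ← Finset.sum_add_distrib]
      exact Finset.sum_congr rfl fun j _ => by ring
    rw [h2] at h1
    have : t * (2 * A) ≤ t * (t * B) := by linarith
    exact le_of_mul_le_mul_left this ht
  by_contra hneg
  push Not at hneg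
  have h1 := key (min 1 (A / (B + 1))) (lt_min one_pos (by positivity)) (min_le_left _ _)
  have h2 : min 1 (A / (B + 1)) * B ≤ A / (B + 1) * B :=
    mul_le_mul_of_nonneg_right (min_le_right _ _) hB0
  have h3 : A / (B + 1) * (B + 1) = A := by field_simp
  have h4 : 0 < A / (B + 1) := by positivity
  nlinarith

lemma aux_abs_le {p : ℕ} (g : Finset (Fin p)) (w : Fin p → ℝ) (j : Fin p) (hj : j ∈ g) :
    |w j| ≤ ((g.sup fun j => Real.nnabs (w j) : NNReal) : ℝ) := by
  have h := Finset.le_sup (f := fun j => Real.nnabs (w j)) hj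
  have h' : ((Real.nnabs (w j) : NNReal) : ℝ) ≤ _ := NNReal.coe_le_coe.2 h
  simpa using h'

lemma aux_holder {p : ℕ} (g : Finset (Fin p)) (lam : ℝ) (π w : Fin p → ℝ)
    (hπ : ∑ j ∈ g, |π j| ≤ lam) :
    ∑ j ∈ g, π j * w j ≤ lam * ((g.sup fun j => Real.nnabs (w j) : NNReal) : ℝ) := by
  calc ∑ j ∈ g, π j * w j
      ≤ ∑ j ∈ g, |π j| * ((g.sup fun j => Real.nnabs (w j) : NNReal) : ℝ) := by
        refine Finset.sum_le_sum fun j hj => ?_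
        refine (le_abs_self _).trans ?_
        rw [abs_mul]
        exact mul_le_mul_of_nonneg_left (aux_abs_le g w j hj) (abs_nonneg _)
    _ = (∑ j ∈ g, |π j|) * _ := by rw [Finset.sum_mul]
    _ ≤ _ := mul_le_mul_of_nonneg_right hπ (NNReal.coe_nonneg _)

lemma aux_dual {p : ℕ} (g : Finset (Fin p)) (hg : g.Nonempty) (lam : ℝ) (hlam : 0 < lam)
    (u π : Fin p → ℝ)
    (hπ : ∑ j ∈ g, |π j| ≤ lam)
    (hmin : ∀ v : Fin p → ℝ, (∑ j ∈ g, |v j| ≤ lam) →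
            ∑ j ∈ g, (u j - π j)^2 ≤ ∑ j ∈ g, (u j - v j)^2) :
    lam * ((g.sup fun j => Real.nnabs (u j - π j) : NNReal) : ℝ)
      ≤ ∑ j ∈ g, π j * (u j - π j) := by
  obtain ⟨k, hk, hkeq⟩ := Finset.exists_mem_eq_sup g hg (fun j => Real.nnabs (u j - π j))
  rw [hkeq, Real.coe_nnabs]
  obtain ⟨s, hs, hs1⟩ : ∃ s : ℝ, (u k - π k) * s = |u k - π k| ∧ |s| = 1 := by
    rcases le_total 0 (u k - π k) with h | h
    · exact ⟨1, by rw [abs_of_nonneg h, mul_one], by simp⟩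
    · exact ⟨-1, by rw [abs_of_nonpos h]; ring, by simp⟩
  have h := aux_var g lam u π (fun j => if j = k then lam * s else 0) hπ hmin (by
    have : ∀ j, |if j = k then lam * s else 0| = if j = k then lam else 0 := by
      intro j
      split_ifs
      · rw [abs_mul, hs1, abs_of_pos hlam, mul_one]
      · simp
    simp only [this]
    rw [Finset.sum_ite_eq' g k, if_pos hk])
  have e : ∑ j ∈ g, (u j - π j) * ((if j = k then lam * s else 0) - π j)
      = (u k - π k) * (lam * s) - ∑ j ∈ g, π j * (u j - π j) := by
    have : ∑ j ∈ g, (if j = k then (u j - π j) * (lam * s) else 0)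
        = (u k - π k) * (lam * s) := by
      rw [Finset.sum_ite_eq' g k, if_pos hk]
    rw [← this, ← Finset.sum_sub_distrib]
    refine Finset.sum_congr rfl fun j _ => ?_
    split_ifs <;> ring
  rw [e] at h
  rw [← hs]
  linarith

lemma aux_exists {p : ℕ} (G : Finset (Finset (Fin p)))
    (hcover : ∀ j : Fin p, ∃ g ∈ G, j ∈ g)
    (lam : ℝ) (hlam : 0 < lam) (u : Fin p → ℝ) :
    ∃ π : Fin p → ℝ, (∀ g ∈ G, ∑ j ∈ g, |π j| ≤ lam) ∧
      ∀ v : Fin p → ℝ, (∀ g ∈ G, ∑ j ∈ g, |v j| ≤ lam) →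
        ∑ j, (u j - π j)^2 ≤ ∑ j, (u j - v j)^2 := by
  set K : Set (Fin p → ℝ) := {v | ∀ g ∈ G, ∑ j ∈ g, |v j| ≤ lam} with hK
  have hclosed : IsClosed K := by
    have : K = ⋂ g ∈ G, {v : Fin p → ℝ | ∑ j ∈ g, |v j| ≤ lam} := by
      ext v; simp [hK]
    rw [this]
    refine isClosed_biInter fun g _ => isClosed_le (by fun_prop) continuous_const
  have hsub : K ⊆ Metric.closedBall 0 lam := by
    intro v hv
    rw [mem_closedBall_zero_iff, pi_norm_le_iff_of_nonneg hlam.le]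
    intro j
    obtain ⟨g, hg, hj⟩ := hcover j
    rw [Real.norm_eq_abs]
    exact (Finset.single_le_sum (f := fun j => |v j|) (fun i _ => abs_nonneg _) hj).trans (hv g hg)
  have hcomp : IsCompact K := (isCompact_closedBall _ _).of_isClosed_subset hclosed hsub
  have hne : K.Nonempty := ⟨0, fun g _ => by simpa using hlam.le⟩
  obtain ⟨π, hπ, hmin⟩ := hcomp.exists_isMinOn hne
    (f := fun v : Fin p → ℝ => ∑ j, (u j - v j)^2) (by fun_prop)
  exact ⟨π, hπ, fun v hv => hmin hv⟩

/-- group thresholding for the group Lasso with non-overlapping groups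
(ℓ∞-norms): the unique minimizer `w*` of `w ↦ ½‖u − w‖₂² + λ ∑_g ‖w_g‖_∞` is given
groupwise by `w*_g = u_g − Π_{‖·‖₁ ≤ λ}(u_g)`, where `Π_{‖·‖₁ ≤ λ}` is the Euclidean
projection onto the ℓ₁-ball of radius `λ`; in particular `w*_g = 0` when
`‖u_g‖₁ ≤ λ`. The ℓ∞-norm of the group subvector is `max_{j ∈ g} |w j|`, written
via `Finset.sup` into `ℝ≥0`. -/
theorem stmt7 {p : ℕ} (G : Finset (Finset (Fin p)))
    (hne : ∀ g ∈ G, g.Nonempty)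
    (hdisj : ∀ g ∈ G, ∀ h ∈ G, g ≠ h → g ∩ h = ∅)
    (hcover : ∀ j : Fin p, ∃ g ∈ G, j ∈ g)
    (lam : ℝ) (hlam : 0 < lam) (u : Fin p → ℝ) :
    ∃ ws : Fin p → ℝ,
      (∀ w : Fin p → ℝ,
          (1/2) * ∑ j, (u j - ws j)^2
              + lam * ∑ g ∈ G, ((g.sup fun j => Real.nnabs (ws j) : NNReal) : ℝ)
          ≤ (1/2) * ∑ j, (u j - w j)^2
              + lam * ∑ g ∈ G, ((g.sup fun j => Real.nnabs (w j) : NNReal) : ℝ)) ∧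
      (∀ w : Fin p → ℝ,
          (1/2) * ∑ j, (u j - w j)^2
              + lam * ∑ g ∈ G, ((g.sup fun j => Real.nnabs (w j) : NNReal) : ℝ)
          ≤ (1/2) * ∑ j, (u j - ws j)^2
              + lam * ∑ g ∈ G, ((g.sup fun j => Real.nnabs (ws j) : NNReal) : ℝ)
          → w = ws) ∧
      (∀ g ∈ G,
        -- there is a projection `π` of `u_g` onto the ℓ₁-ball of radius `λ`
        -- and `w*` equals `u − π` on the group `g`
        ∃ π : Fin p → ℝ,
          (∑ j ∈ g, |π j| ≤ lam) ∧
          (∀ v : Fin p → ℝ, (∑ j ∈ g, |v j| ≤ lam) →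
            ∑ j ∈ g, (u j - π j)^2 ≤ ∑ j ∈ g, (u j - v j)^2) ∧
          (∀ j ∈ g, ws j = u j - π j) ∧
          ((∑ j ∈ g, |u j| ≤ lam) → ∀ j ∈ g, ws j = 0)) := by
  obtain ⟨π, hπ, hmin⟩ := aux_exists G hcover lam hlam u
  have hpart : ∀ f : Fin p → ℝ, ∑ j, f j = ∑ g ∈ G, ∑ j ∈ g, f j := by
    intro f
    have huniv : (Finset.univ : Finset (Fin p)) = G.biUnion id := by
      ext j
      simpa using hcover j
    rw [huniv, Finset.sum_biUnion]
    · rfl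
    · intro a ha b hb hab
      exact Finset.disjoint_iff_inter_eq_empty.2 (hdisj a ha b hb hab)
  have hgmin : ∀ g ∈ G, ∀ v : Fin p → ℝ, (∑ j ∈ g, |v j| ≤ lam) →
      ∑ j ∈ g, (u j - π j)^2 ≤ ∑ j ∈ g, (u j - v j)^2 := by
    intro g hg v hv
    have h := hmin (fun j => if j ∈ g then v j else π j) (by
      intro h hh
      by_cases hgh : g = h
      · subst hgh
        rw [Finset.sum_congr rfl (g := fun j => |v j|) (fun j hj => by rw [if_pos hj])]
        exact hv
      · rw [Finset.sum_congr rfl (g := fun j => |π j|) (fun j hj => by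
          rw [if_neg]
          intro hjg
          have : j ∈ g ∩ h := Finset.mem_inter.2 ⟨hjg, hj⟩
          rw [hdisj g hg h hh hgh] at this
          simp at this)]
        exact hπ h hh)
    rw [← Finset.sum_add_sum_compl g (fun j => (u j - π j)^2),
      ← Finset.sum_add_sum_compl g (fun j => (u j - if j ∈ g then v j else π j)^2),
      Finset.sum_congr (s₁ := g) rfl
        (f := fun j => (u j - if j ∈ g then v j else π j)^2)
        (g := fun j => (u j - v j)^2) (fun j hj => by rw [if_pos hj]),
      Finset.sum_congr (s₁ := gᶜ) rfl
        (f := fun j => (u j - if j ∈ g then v j else π j)^2)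
        (g := fun j => (u j - π j)^2)
        (fun j hj => by rw [if_neg (Finset.mem_compl.1 hj)])] at h
    linarith
  have key : ∀ w : Fin p → ℝ,
      (1/2) * ∑ j, (u j - (u j - π j))^2
          + lam * ∑ g ∈ G, ((g.sup fun j => Real.nnabs (u j - π j) : NNReal) : ℝ)
          + (1/2) * ∑ j, (w j - (u j - π j))^2
      ≤ (1/2) * ∑ j, (u j - w j)^2
          + lam * ∑ g ∈ G, ((g.sup fun j => Real.nnabs (w j) : NNReal) : ℝ) := by
    intro w
    have h1 : lam * ∑ g ∈ G, ((g.sup fun j => Real.nnabs (u j - π j) : NNReal) : ℝ)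
        ≤ ∑ j, π j * (u j - π j) := by
      rw [hpart, Finset.mul_sum]
      exact Finset.sum_le_sum fun g hg =>
        aux_dual g (hne g hg) lam hlam u π (hπ g hg) (hgmin g hg)
    have h2 : ∑ j, π j * w j
        ≤ lam * ∑ g ∈ G, ((g.sup fun j => Real.nnabs (w j) : NNReal) : ℝ) := by
      rw [hpart, Finset.mul_sum]
      exact Finset.sum_le_sum fun g hg => aux_holder g lam π w (hπ g hg)
    have h3 : (1/2) * ∑ j, (u j - (u j - π j))^2 + ∑ j, π j * (u j - π j)
          + (1/2) * ∑ j, (w j - (u j - π j))^2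
        = (1/2) * ∑ j, (u j - w j)^2 + ∑ j, π j * w j := by
      simp only [Finset.mul_sum]
      simp only [← Finset.sum_add_distrib]
      exact Finset.sum_congr rfl fun j _ => by ring
    linarith
  refine ⟨fun j => u j - π j, ?_, ?_, ?_⟩
  · intro w
    have h0 : 0 ≤ ∑ j, (w j - (u j - π j))^2 := Finset.sum_nonneg fun j _ => sq_nonneg _
    have := key w
    linarith
  · intro w hw
    have h0 : 0 ≤ ∑ j, (w j - (u j - π j))^2 := Finset.sum_nonneg fun j _ => sq_nonneg _
    have hk := key w
    have h1 : ∑ j, (w j - (u j - π j))^2 = 0 := by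
      apply le_antisymm _ h0
      linarith
    rw [Finset.sum_eq_zero_iff_of_nonneg (fun j _ => sq_nonneg _)] at h1
    funext j
    have := h1 j (Finset.mem_univ j)
    have := pow_eq_zero_iff (two_ne_zero) |>.1 this
    linarith
  · intro g hg
    refine ⟨π, hπ g hg, hgmin g hg, fun j _ => rfl, fun hu j hj => ?_⟩
    have h := hgmin g hg u hu
    have h1 : ∑ j ∈ g, (u j - π j)^2 = 0 := by
      apply le_antisymm _ (Finset.sum_nonneg fun j _ => sq_nonneg _)
      simpa using h
    rw [Finset.sum_eq_zero_iff_of_nonneg (fun j _ => sq_nonneg _)] at h1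
    exact pow_eq_zero_iff (two_ne_zero) |>.1 (h1 j hj)
end
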